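/- Let 𝓘 be an instance of service network design with restricted routes (SND-RR) on a finite directed graph D = (N,A) with positive integer transit times τ, time horizon T, commodities 𝒦, and designated subgraph D^k ⊆ D for each k ∈ 𝒦, and let D_S be a partial time-expanded network whose timed-node set N_S satisfies property (P1) and whose arcs are given by property (P2). Then for every feasible solution of SND-RR(D_T) with cost C there exists a feasible solution of SND-RR(D_S) with cost at most C; consequently the optimal value of SND-RR(D_S) is a lower bound on the optimal value of SND-RR(D_T). -/

import Mathlib

/-!
Round every departure time `t k i` of the given solution down to the latest time available
in `N_S` at the node of departure, keep the flat paths, and let every truck depart at its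
rounded time: `y' a s` adds up `y a s₀` over all `s₀ ≤ T` that round down to `s` at the tail
of `a`.

Rounding down is monotone (`roundDown_mono`), which makes consecutive arcs of `D_S` chain up, and
it fixes the available times (through `le_roundDown`), which keeps the release times. Flat paths,
and hence true transit times and variable costs, are unchanged; the transit times telescope to at
most `l k - r k` in the given solution (`sum_transit_le`). Commodities sharing an arc and a rounded
departure time are carried by the union of the trucks at the original departure times, so the
capacities hold, and grouping the trucks by rounded time leaves the fixed cost unchanged.
-/

attribute [local instance] Classical.propDecidable

/-- The largest element of `S` that is at most `t` (and `0` if there is none;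
in our setting `0 ∈ S`, so it is the genuine maximum). -/
def roundDown (S : Finset ℕ) (t : ℕ) : ℕ := Nat.findGreatest (· ∈ S) t

theorem roundDown_le (S : Finset ℕ) (t : ℕ) : roundDown S t ≤ t :=
  Nat.findGreatest_le t

theorem roundDown_mem {S : Finset ℕ} (h : 0 ∈ S) (t : ℕ) : roundDown S t ∈ S :=
  Nat.findGreatest_spec (P := (· ∈ S)) (Nat.zero_le t) h

theorem le_roundDown {S : Finset ℕ} {s t : ℕ} (hs : s ∈ S) (hst : s ≤ t) :
    s ≤ roundDown S t :=
  Nat.le_findGreatest (P := (· ∈ S)) hst hs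

theorem roundDown_mono (S : Finset ℕ) {s t : ℕ} (hst : s ≤ t) :
    roundDown S s ≤ roundDown S t :=
  Nat.findGreatest_mono_right (· ∈ S) hst

/-- Telescoping along a trajectory with departure times `t` and transit times `w`: the first
`n + 1` transit times fit between the first departure and the `n`-th arrival. -/
theorem sum_transit_le (t w : ℕ → ℕ) (m : ℕ)
    (h : ∀ i, i + 1 < m → t i + w i ≤ t (i + 1)) (n : ℕ) (hn : n < m) :
    t 0 + ∑ i ∈ Finset.range (n + 1), w i ≤ t n + w n := by
  induction n with
  | zero => simp
  | succ n ih =>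
    have h1 := ih (by omega)
    have h2 := h n hn
    rw [Finset.sum_range_succ]
    omega

/-- **Lower-bound theorem for SND-RR.**  Let `D = (N,A)` be a flat network with positive
transit times `τ`, horizon `T`, commodities `K` (with origins `o`, destinations `d`,
release times `r`, deadlines `l ≤ T`, demands `q`, designated arc sets `Ak ⊆ A`),
per-unit costs `c`, fixed costs `f` and capacities `u`.  Let the timed-node set,
given as the family `NS` of available times at each node, satisfy property (P1); the
partial network `D_S` is built from it by property (P2).  A feasible solution of
SND-RR(D_T) is a trajectory for each commodity (flat path `v k` with exact departure
times `t k`, arcs in `D^k`, respecting release times and deadlines) together with truck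
counts `y`, consolidating commodities that share a flat arc and a departure time.
Then there is a feasible solution of SND-RR(D_S) — trajectories whose departure times are
available in `N_S`, whose (rounded) arcs chain up in `D_S`, which respect release times,
deadlines and the true-transit-time constraint `Σ τ ≤ l_k − r_k` — of cost at most the
cost of the given solution.  Consequently the optimal value of SND-RR(D_S) is a lower
bound on the optimal value of SND-RR(D_T). -/
theorem snd_rr_partial_network_lower_bound
    {N K : Type*} [Fintype K]
    (A : Finset (N × N)) (τ : N × N → ℕ) (T : ℕ)
    (hτ : ∀ a ∈ A, 0 < τ a)
    (c : K → N × N → ℝ) (f : N × N → ℝ) (u : N × N → ℕ)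
    (hc : ∀ (k : K), ∀ a ∈ A, 0 < c k a) (hf : ∀ a ∈ A, 0 < f a)
    (hu : ∀ a ∈ A, 0 < u a)
    (o d : K → N) (r l : K → ℕ) (q : K → ℕ)
    (hq : ∀ k, 0 < q k) (hlT : ∀ k, l k ≤ T)
    (Ak : K → Finset (N × N)) (hAkA : ∀ k, Ak k ⊆ A)
    (NS : N → Finset ℕ)
    -- property (P1)
    (hP1o : ∀ k, r k ∈ NS (o k)) (hP1d : ∀ k, l k ∈ NS (d k))
    (hP10 : ∀ v : N, 0 ∈ NS v) (hP1T : ∀ v : N, T ∈ NS v)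
    (hNST : ∀ v : N, ∀ s ∈ NS v, s ≤ T)
    -- a feasible solution of SND-RR(D_T): trajectories ...
    (m : K → ℕ) (v : K → ℕ → N) (t : K → ℕ → ℕ) (y : N × N → ℕ → ℕ)
    (hm : ∀ k, 0 < m k)
    (hv0 : ∀ k, v k 0 = o k) (hvm : ∀ k, v k (m k) = d k)
    (harc : ∀ k, ∀ i < m k, (v k i, v k (i+1)) ∈ Ak k)
    (hr : ∀ k, r k ≤ t k 0)
    (hchain : ∀ k, ∀ i, i + 1 < m k → t k i + τ (v k i, v k (i+1)) ≤ t k (i+1))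
    (hdl : ∀ k, t k (m k - 1) + τ (v k (m k - 1), v k (m k)) ≤ l k)
    (hhor : ∀ k, ∀ i < m k, t k i + τ (v k i, v k (i+1)) ≤ T)
    -- ... and truck counts satisfying the capacity constraints
    (hcap : ∀ a ∈ A, ∀ s ≤ T,
      (∑ k, if (∃ i < m k, (v k i, v k (i+1)) = a ∧ t k i = s) then q k else 0)
        ≤ u a * y a s) :
    -- there is a feasible solution of SND-RR(D_S) of cost at most the cost of (x,y)
    ∃ (m' : K → ℕ) (v' : K → ℕ → N) (t' : K → ℕ → ℕ) (y' : N × N → ℕ → ℕ),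
      (∀ k, 0 < m' k) ∧
      (∀ k, v' k 0 = o k) ∧ (∀ k, v' k (m' k) = d k) ∧
      (∀ k, ∀ i < m' k, (v' k i, v' k (i+1)) ∈ Ak k) ∧
      -- all departure times are available time points of the partial network
      (∀ k, ∀ i < m' k, t' k i ∈ NS (v' k i)) ∧
      (∀ k, ∀ i < m' k, t' k i + τ (v' k i, v' k (i+1)) ≤ T) ∧
      (∀ k, r k ≤ t' k 0) ∧
      -- consecutive arcs of `D_S` chain up: the rounded arrival time of each movement
      -- arc of `D_S` is at most the next departure time
      (∀ k, ∀ i, i + 1 < m' k →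
        roundDown (NS (v' k (i+1))) (t' k i + τ (v' k i, v' k (i+1))) ≤ t' k (i+1)) ∧
      (∀ k, roundDown (NS (d k))
          (t' k (m' k - 1) + τ (v' k (m' k - 1), v' k (m' k))) ≤ l k) ∧
      -- the true-transit-time feasibility constraint of SND-RR(D_S)
      (∀ k, (∑ i ∈ Finset.range (m' k), (τ (v' k i, v' k (i+1)) : ℤ))
          ≤ (l k : ℤ) - (r k : ℤ)) ∧
      -- capacity constraints in `D_S`
      (∀ a ∈ A, ∀ s ≤ T,
        (∑ k, if (∃ i < m' k, (v' k i, v' k (i+1)) = a ∧ t' k i = s) then q k else 0)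
          ≤ u a * y' a s) ∧
      -- the cost of the new solution is at most the cost of the given one
      ((∑ a ∈ A, ∑ s ∈ Finset.range (T+1), f a * (y' a s : ℝ))
          + ∑ k, ∑ i ∈ Finset.range (m' k), c k (v' k i, v' k (i+1)) * (q k : ℝ)
        ≤ (∑ a ∈ A, ∑ s ∈ Finset.range (T+1), f a * (y a s : ℝ))
          + ∑ k, ∑ i ∈ Finset.range (m k), c k (v k i, v k (i+1)) * (q k : ℝ)) := by
  refine ⟨m, v, fun k i => roundDown (NS (v k i)) (t k i),
    fun a s => ∑ s₀ ∈ Finset.range (T + 1) with roundDown (NS a.1) s₀ = s, y a s₀,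
    hm, hv0, hvm, harc, fun k i _ => roundDown_mem (hP10 _) _, ?_, ?_, ?_, ?_, ?_, ?_, ?_⟩
  · intro k i hi
    exact (Nat.add_le_add_right (roundDown_le _ _) _).trans (hhor k i hi)
  · intro k
    exact le_roundDown (by rw [hv0]; exact hP1o k) (hr k)
  · intro k i hi
    exact roundDown_mono _
      ((Nat.add_le_add_right (roundDown_le _ _) _).trans (hchain k i hi))
  · intro k
    exact (roundDown_le _ _).trans
      ((Nat.add_le_add_right (roundDown_le _ _) _).trans (hdl k))
  · intro k
    have h1 := sum_transit_le (t k) (fun i => τ (v k i, v k (i+1))) (m k) (hchain k)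
      (m k - 1) (by have := hm k; omega)
    have h2 : m k - 1 + 1 = m k := by have := hm k; omega
    simp only [h2] at h1
    have h3 := hdl k
    have h4 := hr k
    rw [← Nat.cast_sum]
    omega
  · intro a ha s _
    rw [Finset.mul_sum]
    -- Each original departure time obeys its own capacity constraint; exchange the sums.
    refine le_trans ?_ (Finset.sum_le_sum fun s₀ hs₀ => hcap a ha s₀ ?_)
    · rw [Finset.sum_comm]
      refine Finset.sum_le_sum fun k _ => ?_
      split_ifs with h
      · obtain ⟨i, hi, hia, his⟩ := h
        have hT : t k i ≤ T := (Nat.le_add_right _ _).trans (hhor k i hi)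
        have hmem : t k i ∈ (Finset.range (T + 1)).filter
            (fun s₀ => roundDown (NS a.1) s₀ = s) := by
          rw [Finset.mem_filter, Finset.mem_range]
          refine ⟨by omega, ?_⟩
          rw [← hia]
          exact his
        refine le_trans ?_ (Finset.single_le_sum (fun _ _ => Nat.zero_le _) hmem)
        rw [if_pos ⟨i, hi, hia, rfl⟩]
      · exact Nat.zero_le _
    · have := Finset.mem_range.mp (Finset.mem_filter.mp hs₀).1
      omega
  · refine le_of_eq ?_
    congr 1
    refine Finset.sum_congr rfl fun a _ => ?_
    rw [← Finset.mul_sum, ← Finset.mul_sum]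
    congr 1
    push_cast
    exact Finset.sum_fiberwise_of_maps_to
      (fun s₀ hs₀ => Finset.mem_range.mpr
        ((roundDown_le _ _).trans_lt (Finset.mem_range.mp hs₀))) _
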